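/- Let x, x' be points of X = ℙ(ℝ²) and g ∈ SL₂(ℝ), and let x_g^m be a point of X minimizing ℝw ↦ ‖gw‖/‖w‖. Assume that e^{−2κ(g)} + d(x_g^m, g⁻¹x') ≤ (1/2) d(g⁻¹x', x). Then | σ(g,x) − κ(g) − log d(g⁻¹x', x) | ≤ 2 ( e^{−2κ(g)} + d(x_g^m, g⁻¹x') ) / d(g⁻¹x', x). -/

import Mathlib

open MeasureTheory Filter

noncomputable section

abbrev SL2 := Matrix.SpecialLinearGroup (Fin 2) ℝ

abbrev PX := Projectivization ℝ (Fin 2 → ℝ)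

instance : TopologicalSpace SL2 := instTopologicalSpaceSubtype
instance : TopologicalSpace PX := instTopologicalSpaceQuotient
instance : MeasurableSpace SL2 := borel _
instance : MeasurableSpace PX := borel _

/-- Euclidean norm on ℝ². -/
def enorm2 (v : Fin 2 → ℝ) : ℝ := Real.sqrt (v 0 ^ 2 + v 1 ^ 2)

/-- Operator norm of g ∈ SL₂(ℝ) w.r.t. the Euclidean norm on ℝ². -/
def opNorm (g : SL2) : ℝ :=
  ‖Matrix.toEuclideanCLM (𝕜 := ℝ) (n := Fin 2) (g : Matrix (Fin 2) (Fin 2) ℝ)‖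

/-- Cartan projection κ(g) = log ‖g‖. -/
def kappa (g : SL2) : ℝ := Real.log (opNorm g)

/-- The projective action of SL₂(ℝ) on ℙ(ℝ²). -/
def act (g : SL2) (x : PX) : PX :=
  Projectivization.map ((Matrix.SpecialLinearGroup.toLin' g).toLinearMap)
    (LinearEquiv.injective _) x

/-- The norm cocycle σ(g, ℝv) = log (‖gv‖/‖v‖). -/
def cocycle (g : SL2) (x : PX) : ℝ :=
  Real.log (enorm2 ((g : Matrix (Fin 2) (Fin 2) ℝ).mulVec x.rep) / enorm2 x.rep)

/-- The sine distance d(ℝv, ℝw) = |det(v,w)|/(‖v‖‖w‖) on ℙ(ℝ²). -/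
def projDist (x y : PX) : ℝ :=
  |x.rep 0 * y.rep 1 - x.rep 1 * y.rep 0| / (enorm2 x.rep * enorm2 y.rep)

/-- An angle θ(x) ∈ ℝ representing x = ℝ(cos θ, sin θ). -/
def pangle (x : PX) : ℝ := Complex.arg (x.rep 0 + x.rep 1 * Complex.I)

/-- The (topological) support of a measure. -/
def measSupp (μ : Measure SL2) : Set SL2 :=
  {g | ∀ U : Set SL2, IsOpen U → g ∈ U → 0 < μ U}

/-- μ has a finite exponential moment. -/
def HasExpMoment (μ : Measure SL2) : Prop :=
  ∃ ε₁ > (0 : ℝ), ∫⁻ g, ENNReal.ofReal (opNorm g ^ ε₁) ∂μ < ⊤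

/-- The group generated by the support of μ is Zariski dense in SL₂(ℝ),
equivalently it is not solvable. -/
def ZariskiDense (μ : Measure SL2) : Prop :=
  ¬ IsSolvable (Subgroup.closure (measSupp μ))

/-- ν is μ-stationary: μ ∗ ν = ν. -/
def IsMuStationary (μ : Measure SL2) (ν : Measure PX) : Prop :=
  μ.bind (fun g => ν.map (act g)) = ν

/-- The product g₁ ⋯ gₙ of a word (g₁, …, gₙ). -/
def word {n : ℕ} (g : Fin n → SL2) : SL2 := (List.ofFn g).prod

/-- The product measure μ^{⊗n} on words of length n. -/
def μpi (μ : Measure SL2) (n : ℕ) : Measure (Fin n → SL2) := Measure.pi fun _ => μ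

theorem aux_enorm2_eq (v : Fin 2 → ℝ) : enorm2 v = ‖(WithLp.toLp 2 v : EuclideanSpace ℝ (Fin 2))‖ := by
  rw [EuclideanSpace.norm_eq]
  simp [enorm2, Fin.sum_univ_two]

theorem aux_sq (v : Fin 2 → ℝ) : enorm2 v ^ 2 = v 0 ^ 2 + v 1 ^ 2 := by
  unfold enorm2
  exact Real.sq_sqrt (by positivity)

theorem aux_nonneg (v : Fin 2 → ℝ) : 0 ≤ enorm2 v := Real.sqrt_nonneg _

theorem aux_pos (x : PX) : 0 < enorm2 x.rep := by
  rw [aux_enorm2_eq]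
  have := x.rep_nonzero
  simpa using this

theorem aux_det_le (u v : Fin 2 → ℝ) : |u 0 * v 1 - u 1 * v 0| ≤ enorm2 u * enorm2 v := by
  apply abs_le_of_sq_le_sq _ (mul_nonneg (aux_nonneg u) (aux_nonneg v))
  rw [mul_pow, aux_sq, aux_sq]
  nlinarith [sq_nonneg (u 0 * v 0 + u 1 * v 1)]

theorem aux_inner_le (u v : Fin 2 → ℝ) : |u 0 * v 0 + u 1 * v 1| ≤ enorm2 u * enorm2 v := by
  apply abs_le_of_sq_le_sq _ (mul_nonneg (aux_nonneg u) (aux_nonneg v))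
  rw [mul_pow, aux_sq, aux_sq]
  nlinarith [sq_nonneg (u 0 * v 1 - u 1 * v 0)]

theorem aux_symm (x y : PX) : projDist x y = projDist y x := by
  unfold projDist
  rw [mul_comm (enorm2 x.rep), ← abs_neg]
  congr 2
  ring

theorem aux_tri (x y z : PX) : projDist x z ≤ projDist x y + projDist y z := by
  unfold projDist
  have hx := aux_pos x
  have hy := aux_pos y
  have hz := aux_pos z
  have e := aux_sq y.rep
  have h1 := aux_inner_le y.rep z.rep
  have h2 := aux_inner_le x.rep y.rep
  generalize x.rep = a at *
  generalize y.rep = b at *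
  generalize z.rep = c at *
  have key : enorm2 b ^ 2 * |a 0 * c 1 - a 1 * c 0| ≤
      |a 0 * b 1 - a 1 * b 0| * (enorm2 b * enorm2 c) +
      (enorm2 a * enorm2 b) * |b 0 * c 1 - b 1 * c 0| := by
    calc enorm2 b ^ 2 * |a 0 * c 1 - a 1 * c 0|
        = |(a 0 * b 1 - a 1 * b 0) * (b 0 * c 0 + b 1 * c 1) +
          (a 0 * b 0 + a 1 * b 1) * (b 0 * c 1 - b 1 * c 0)| := by
          rw [← abs_of_nonneg (sq_nonneg (enorm2 b)), ← abs_mul, e]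
          congr 1; ring
      _ ≤ _ := by
          refine (abs_add_le _ _).trans ?_
          rw [abs_mul, abs_mul]
          gcongr
  rw [div_add_div _ _ (by positivity) (by positivity), div_le_div_iff₀ (by positivity) (by positivity)]
  have := mul_le_mul_of_nonneg_left key (mul_pos hx hz).le
  nlinarith [this]

theorem aux_op (g : SL2) (v : Fin 2 → ℝ) :
    enorm2 ((g : Matrix (Fin 2) (Fin 2) ℝ).mulVec v) ≤ opNorm g * enorm2 v := by
  rw [aux_enorm2_eq, aux_enorm2_eq]
  have := (Matrix.toEuclideanCLM (𝕜 := ℝ) (n := Fin 2)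
    (g : Matrix (Fin 2) (Fin 2) ℝ)).le_opNorm (WithLp.toLp 2 v)
  simpa [opNorm] using this

theorem aux_det (g : SL2) : g 0 0 * g 1 1 - g 0 1 * g 1 0 = 1 := by
  have := g.det_coe
  rwa [Matrix.det_fin_two] at this

theorem aux_op_pos (g : SL2) : 0 < opNorm g := by
  refine lt_of_le_of_ne (norm_nonneg _) fun h0 => ?_
  have h1 := norm_eq_zero.1 h0.symm
  have h2 : (g : Matrix (Fin 2) (Fin 2) ℝ) = 0 := by simpa using h1
  have h3 := g.det_coe
  rw [h2] at h3
  simp at h3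

theorem aux_log (s D ε : ℝ) (hD : 0 < D) (h : ε ≤ 1 / 2 * D) (h1 : s ≤ D + ε) (h2 : D - ε ≤ s) :
    |Real.log s - Real.log D| ≤ 2 * ε / D := by
  have hs : 0 < s := by linarith
  have he : 0 ≤ ε := by linarith
  rw [abs_le]
  constructor
  · have := Real.log_le_sub_one_of_pos (div_pos hD hs)
    rw [Real.log_div hD.ne' hs.ne'] at this
    have h3 : D / s - 1 ≤ 2 * ε / D := by
      rw [div_sub_one hs.ne', div_le_div_iff₀ hs hD]
      nlinarith
    linarith
  · have := Real.log_le_sub_one_of_pos (div_pos hs hD)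
    rw [Real.log_div hs.ne' hD.ne'] at this
    have h3 : s / D - 1 ≤ 2 * ε / D := by
      rw [div_sub_one hD.ne']
      gcongr
      linarith
    linarith

theorem aux_main (g : SL2) (m v : Fin 2 → ℝ) (hm : 0 < enorm2 m) (hv : 0 < enorm2 v)
    (h : enorm2 ((g : Matrix (Fin 2) (Fin 2) ℝ).mulVec m) / enorm2 m = (opNorm g)⁻¹) :
    |m 0 * v 1 - m 1 * v 0| / (enorm2 m * enorm2 v) ≤
      enorm2 ((g : Matrix (Fin 2) (Fin 2) ℝ).mulVec v) / enorm2 v / opNorm g ∧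
    enorm2 ((g : Matrix (Fin 2) (Fin 2) ℝ).mulVec v) / enorm2 v / opNorm g ≤
      |m 0 * v 1 - m 1 * v 0| / (enorm2 m * enorm2 v) + (opNorm g ^ 2)⁻¹ := by
  have hN := aux_op_pos g
  rw [div_eq_iff hm.ne'] at h
  constructor
  · have hd : m 0 * v 1 - m 1 * v 0 =
      ((g : Matrix (Fin 2) (Fin 2) ℝ).mulVec m) 0 * ((g : Matrix (Fin 2) (Fin 2) ℝ).mulVec v) 1 -
      ((g : Matrix (Fin 2) (Fin 2) ℝ).mulVec m) 1 * ((g : Matrix (Fin 2) (Fin 2) ℝ).mulVec v) 0 := by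
      simp only [Matrix.mulVec, dotProduct, Fin.sum_univ_two]
      linear_combination (-(m 0 * v 1 - m 1 * v 0)) * aux_det g
    have := aux_det_le ((g : Matrix (Fin 2) (Fin 2) ℝ).mulVec m)
      ((g : Matrix (Fin 2) (Fin 2) ℝ).mulVec v)
    rw [← hd, h] at this
    rw [div_le_iff₀ (by positivity)]
    refine this.trans (le_of_eq ?_)
    field_simp
  · have hJ : enorm2 ![-m 1, m 0] = enorm2 m := by
      simp [enorm2, add_comm]
    have h1 := aux_op g ![-m 1, m 0]
    rw [hJ] at h1
    have h2 := aux_inner_le m v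
    have key : enorm2 m ^ 2 * enorm2 ((g : Matrix (Fin 2) (Fin 2) ℝ).mulVec v) ≤
        (enorm2 m * enorm2 v) * ((opNorm g)⁻¹ * enorm2 m) +
        |m 0 * v 1 - m 1 * v 0| * (opNorm g * enorm2 m) := by
      have e : (enorm2 m ^ 2) • WithLp.toLp 2 ((g : Matrix (Fin 2) (Fin 2) ℝ).mulVec v) =
        (m 0 * v 0 + m 1 * v 1) • WithLp.toLp 2 ((g : Matrix (Fin 2) (Fin 2) ℝ).mulVec m) +
        (m 0 * v 1 - m 1 * v 0) •
          WithLp.toLp 2 ((g : Matrix (Fin 2) (Fin 2) ℝ).mulVec ![-m 1, m 0]) := by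
        rw [aux_sq]
        ext i
        fin_cases i <;> simp <;> ring
      have e2 := congrArg norm e
      rw [norm_smul, ← aux_enorm2_eq, Real.norm_of_nonneg (sq_nonneg _)] at e2
      rw [e2]
      refine (norm_add_le _ _).trans ?_
      rw [norm_smul, norm_smul, ← aux_enorm2_eq, ← aux_enorm2_eq, h, Real.norm_eq_abs,
        Real.norm_eq_abs]
      gcongr
    rw [div_div, div_le_iff₀ (by positivity)]
    refine le_of_mul_le_mul_left (key.trans (le_of_eq ?_)) (pow_pos hm 2)
    field_simp
    ring

theorem cocycle_cartan_approximation (g : SL2) (x x' xm : PX)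
    (hxm : enorm2 ((g : Matrix (Fin 2) (Fin 2) ℝ).mulVec xm.rep) / enorm2 xm.rep
      = Real.exp (-kappa g))
    (h : Real.exp (-(2 * kappa g)) + projDist xm (act g⁻¹ x') ≤
      (1 / 2) * projDist (act g⁻¹ x') x) :
    |cocycle g x - kappa g - Real.log (projDist (act g⁻¹ x') x)| ≤
      2 * (Real.exp (-(2 * kappa g)) + projDist xm (act g⁻¹ x')) /
        projDist (act g⁻¹ x') x := by
  have hN := aux_op_pos g
  have e1 : Real.exp (-kappa g) = (opNorm g)⁻¹ := by
    rw [Real.exp_neg, kappa, Real.exp_log hN]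
  have e2 : Real.exp (-(2 * kappa g)) = (opNorm g ^ 2)⁻¹ := by
    rw [Real.exp_neg, two_mul, Real.exp_add, kappa, Real.exp_log hN, sq]
  rw [e1] at hxm
  rw [e2] at h ⊢
  generalize act g⁻¹ x' = y at *
  obtain ⟨b1, b2⟩ := aux_main g xm.rep x.rep (aux_pos xm) (aux_pos x) hxm
  change projDist xm x ≤ _ at b1
  change _ ≤ projDist xm x + _ at b2
  have t1 := aux_tri xm y x
  have t2 := aux_tri y xm x
  rw [aux_symm y xm] at t2
  have hp : 0 < (opNorm g ^ 2)⁻¹ := by positivity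
  have hd : 0 ≤ projDist xm y :=
    div_nonneg (abs_nonneg _) (mul_nonneg (aux_nonneg _) (aux_nonneg _))
  have hD : 0 < projDist y x := by linarith
  have hs := aux_log _ _ _ hD h (by linarith : _ ≤ _) (by linarith : _ ≤
    enorm2 ((g : Matrix (Fin 2) (Fin 2) ℝ).mulVec x.rep) / enorm2 x.rep / opNorm g)
  have hpos : 0 < enorm2 ((g : Matrix (Fin 2) (Fin 2) ℝ).mulVec x.rep) / enorm2 x.rep / opNorm g := by
    linarith
  rw [Real.log_div (by intro h0; rw [h0] at hpos; simp at hpos) hN.ne'] at hs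
  exact hs

end
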